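/- arXiv:1810.08867 — 2 statements merged into one kernel-verified Lean document; each statement's English description precedes it below -/
import Mathlib

section
/- Let π be a discrete k-DPP on ground set [n] and fix element n. Let Ω_n (resp. Ω_n̄) be states containing (resp. not containing) n, with conditioned distributions π_n and π_n̄. For any subset A ⊆ Ω_n, the neighbor set N_n̄(A) = {y ∈ Ω_n̄ : ∃x ∈ A, |x∩y| = k−1, y = x − n + j for some j} satisfies π_n̄(N_n̄(A)) ≥ π_n(A). -/
open Finset

/-- Determinant of the principal submatrix of `L` indexed by the finite set `S`. -/
noncomputable def gramDet {m : ℕ} (L : Matrix (Fin m) (Fin m) ℝ)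
    (S : Finset (Fin m)) : ℝ :=
  Matrix.det (Matrix.of (fun i j : {x // x ∈ S} => L i.1 j.1))

section Stable

open scoped ComplexOrder

/-- The half-open upper half plane. -/
def upK : Set ℂ := {z | 0 < z.im ∨ (z.im = 0 ∧ 0 < z.re)}

lemma upK_convex : Convex ℝ upK := by
  intro x hx y hy a b ha hb hab
  simp only [upK, Set.mem_ofPred_eq, Complex.add_im, Complex.add_re, Complex.real_smul,
    Complex.mul_im, Complex.mul_re, Complex.ofReal_re, Complex.ofReal_im, zero_mul, add_zero,
    sub_zero] at *
  rcases ha.eq_or_lt with rfl | ha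
  · have : b = 1 := by linarith
    subst this
    simpa using hy
  rcases hb.eq_or_lt with rfl | hb
  · have : a = 1 := by linarith
    subst this
    simpa using hx
  rcases hx with hx | ⟨hx, hx'⟩ <;> rcases hy with hy | ⟨hy, hy'⟩
  · left; positivity
  · left; rw [hy]; simp; positivity
  · left; rw [hx]; simp; positivity
  · right; rw [hx, hy]; simp; positivity

lemma upK_sum {ι : Type*} [Fintype ι] (ζ : ι → ℂ) (hζ : ∀ i, ζ i ∈ upK) (c : ι → ℝ)
    (hc : ∀ i, 0 ≤ c i) (hne : ∃ i, c i ≠ 0) : ∑ i, ζ i * (c i : ℂ) ∈ upK := by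
  have him : ∀ i, 0 ≤ (ζ i).im := fun i => by
    rcases hζ i with h | h
    · exact h.le
    · exact h.1.ge
  have e1 : (∑ i, ζ i * (c i : ℂ)).im = ∑ i, (ζ i).im * c i := by simp [Complex.im_sum]
  have e2 : (∑ i, ζ i * (c i : ℂ)).re = ∑ i, (ζ i).re * c i := by simp [Complex.re_sum]
  have hnn : 0 ≤ ∑ i, (ζ i).im * c i :=
    Finset.sum_nonneg fun i _ => mul_nonneg (him i) (hc i)
  simp only [upK, Set.mem_ofPred_eq, e1, e2]
  rcases hnn.eq_or_lt with h0 | h0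
  · right
    refine ⟨h0.symm, ?_⟩
    have hz := (Finset.sum_eq_zero_iff_of_nonneg
      (fun i _ => mul_nonneg (him i) (hc i))).1 h0.symm
    have key : ∀ i, c i ≠ 0 → 0 < (ζ i).re := by
      intro i hi
      have h1 := hz i (Finset.mem_univ i)
      have h2 : (ζ i).im = 0 := by
        rcases mul_eq_zero.1 h1 with h | h
        · exact h
        · exact absurd h hi
      rcases hζ i with h | h
      · linarith
      · exact h.2
    obtain ⟨j, hj⟩ := hne
    refine Finset.sum_pos' (fun i _ => ?_) ⟨j, Finset.mem_univ j, ?_⟩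
    · by_cases hi : c i = 0
      · simp [hi]
      · exact mul_nonneg (key i hi).le (hc i)
    · exact mul_pos (key j hj) (lt_of_le_of_ne (hc j) (Ne.symm hj))
  · exact Or.inl h0

lemma posDef_complex {n : ℕ} (L : Matrix (Fin n) (Fin n) ℝ) (hL : L.PosDef) :
    (L.map (fun x : ℝ => (x : ℂ))).PosDef := by
  have hps : (L.map (fun x : ℝ => (x : ℂ))).PosSemidef := by
    obtain ⟨m, v, hv⟩ := Matrix.posSemidef_iff_eq_sum_vecMulVec.mp hL.posSemidef
    have : L.map (fun x : ℝ => (x : ℂ)) =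
        ∑ i, Matrix.vecMulVec (fun j => (v i j : ℂ)) (star (fun j => (v i j : ℂ))) := by
      ext a b
      rw [hv]
      simp [Matrix.sum_apply, Matrix.vecMulVec_apply]
    rw [this]
    exact Matrix.posSemidef_sum _ fun i _ => Matrix.posSemidef_vecMulVec_self_star _
  rw [hps.posDef_iff_det_ne_zero]
  have : (L.map (fun x : ℝ => (x : ℂ))).det = (L.det : ℂ) := by
    exact (RingHom.map_det Complex.ofRealHom L).symm
  rw [this]
  exact_mod_cast hL.det_pos.ne'

lemma root_mem_upK {n : ℕ} (L : Matrix (Fin n) (Fin n) ℝ) (hL : L.PosDef) (ζ : Fin n → ℂ)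
    (hζ : ∀ i, ζ i ∈ upK) (y : ℂ)
    (hy : (Matrix.diagonal ζ * L.map (fun x : ℝ => (x : ℂ))).charpoly.eval y = 0) :
    y ∈ upK := by
  have hP := posDef_complex L hL
  set M := L.map (fun x : ℝ => (x : ℂ)) with hM
  rw [Matrix.eval_charpoly] at hy
  obtain ⟨x, hx0, hx⟩ := Matrix.exists_mulVec_eq_zero_iff.2 hy
  have hq := hP.dotProduct_mulVec_pos hx0
  set v := M.mulVec x with hv
  have hyx : ∀ i, y * x i = ζ i * v i := by
    intro i
    have := congrFun hx i
    rw [Matrix.sub_mulVec, ← Matrix.mulVec_mulVec, ← hv] at this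
    simp only [Pi.sub_apply, Matrix.scalar_apply, Matrix.mulVec_diagonal, Pi.zero_apply] at this
    exact sub_eq_zero.1 this
  have hv0 : ∃ i, v i ≠ 0 := by
    by_contra h
    push Not at h
    have : v = 0 := funext h
    rw [this] at hq
    simp at hq
  obtain ⟨hqre, hqim⟩ := Complex.lt_def.1 hq
  set q := star x ⬝ᵥ v with hqd
  have hqr : q = (q.re : ℂ) := by
    apply Complex.ext <;> simp
    simpa using hqim.symm
  have hqs : star q = ∑ i, star (v i) * x i := by
    rw [hqd]
    simp [dotProduct, mul_comm]
  have hqs' : star q = (q.re : ℂ) := by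
    rw [hqr]; simp
  have hmain : y * (q.re : ℂ) = ∑ i, ζ i * ((Complex.normSq (v i) : ℝ) : ℂ) := by
    rw [← hqs', hqs, Finset.mul_sum]
    refine Finset.sum_congr rfl fun i _ => ?_
    have h2 : ((Complex.normSq (v i) : ℝ) : ℂ) = star (v i) * v i :=
      Complex.normSq_eq_conj_mul_self
    rw [h2]
    calc y * (star (v i) * x i) = star (v i) * (y * x i) := by ring
      _ = _ := by rw [hyx]; ring
  have hin := upK_sum ζ hζ (fun i => Complex.normSq (v i)) (fun i => Complex.normSq_nonneg _)
    (by obtain ⟨i, hi⟩ := hv0; exact ⟨i, by simpa using hi⟩)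
  rw [← hmain] at hin
  have hqre' : 0 < q.re := by simpa using hqre
  simp only [upK, Set.mem_ofPred_eq, Complex.mul_im, Complex.mul_re, Complex.ofReal_re,
    Complex.ofReal_im, mul_zero, zero_add, sub_zero] at hin
  rcases hin with h | ⟨h, h'⟩
  · left; exact pos_of_mul_pos_left h hqre'.le
  · right
    refine ⟨?_, pos_of_mul_pos_left h' hqre'.le⟩
    rcases mul_eq_zero.1 h with h | h
    · exact h
    · exact absurd h hqre'.ne'

lemma derivative_roots (p : Polynomial ℂ) (hp : p.rootSet ℂ ⊆ upK) (j : ℕ) :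
    (Polynomial.derivative^[j] p).rootSet ℂ ⊆ upK := by
  induction j with
  | zero => simpa using hp
  | succ j ih =>
    rw [Function.iterate_succ_apply']
    by_cases h : 0 < (Polynomial.derivative^[j] p).degree
    · exact (Polynomial.rootSet_derivative_subset_convexHull_rootSet h).trans
        (convexHull_min ih upK_convex)
    · rw [Polynomial.eq_C_of_degree_le_zero (not_lt.1 h)]
      simp

lemma coeff_charpoly_ne {n : ℕ} (L : Matrix (Fin n) (Fin n) ℝ) (hL : L.PosDef) (ζ : Fin n → ℂ)
    (hζ : ∀ i, ζ i ∈ upK) (j : ℕ) (hj : j ≤ n) :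
    (Matrix.diagonal ζ * L.map (fun x : ℝ => (x : ℂ))).charpoly.coeff j ≠ 0 := by
  set p := (Matrix.diagonal ζ * L.map (fun x : ℝ => (x : ℂ))).charpoly with hp
  intro h0
  have hroots : p.rootSet ℂ ⊆ upK := by
    intro y hy
    rw [Polynomial.mem_rootSet, Polynomial.coe_aeval_eq_eval] at hy
    exact root_mem_upK L hL ζ hζ y hy.2
  have h1 := derivative_roots p hroots j
  have hmonic : p.Monic := Matrix.charpoly_monic _
  have hdeg : p.natDegree = n := by
    rw [hp, Matrix.charpoly_natDegree_eq_dim]; simp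
  have hne : Polynomial.derivative^[j] p ≠ 0 := by
    intro h
    have := congrArg (fun q => Polynomial.coeff q (n - j)) h
    simp only [Polynomial.coeff_iterate_derivative, Nat.sub_add_cancel hj,
      Polynomial.coeff_zero] at this
    rw [← hdeg, hmonic.coeff_natDegree, hdeg] at this
    simp [Nat.descFactorial_eq_zero_iff_lt] at this
    omega
  have hmem : (0 : ℂ) ∈ (Polynomial.derivative^[j] p).rootSet ℂ := by
    rw [Polynomial.mem_rootSet, Polynomial.coe_aeval_eq_eval]
    refine ⟨hne, ?_⟩
    rw [← Polynomial.coeff_zero_eq_eval_zero, Polynomial.coeff_iterate_derivative]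
    simp [h0]
  have := h1 hmem
  simp [upK] at this

lemma stable_sum_ne {n : ℕ} (L : Matrix (Fin n) (Fin n) ℝ) (hL : L.PosDef) (ζ : Fin n → ℂ)
    (hζ : ∀ i, ζ i ∈ upK) (k : ℕ) (hk : k ≤ n) :
    ∑ S ∈ (univ : Finset (Fin n)).powersetCard k, (gramDet L S : ℂ) * ∏ i ∈ S, ζ i ≠ 0 := by
  have h := coeff_charpoly_ne L hL ζ hζ (n - k) (Nat.sub_le _ _)
  have h2 := Matrix.charpoly_coeff_eq_sum_minors
    (Matrix.diagonal ζ * L.map (fun x : ℝ => (x : ℂ))) k (by simpa using hk)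
  rw [Fintype.card_fin] at h2
  rw [h2] at h
  have h3 := right_ne_zero_of_mul h
  convert h3 using 1
  refine Finset.sum_congr rfl fun S _ => ?_
  have : (Matrix.diagonal ζ * L.map (fun x : ℝ => (x : ℂ))).submatrix
      (Subtype.val : S → Fin n) (Subtype.val : S → Fin n) =
      Matrix.diagonal (fun i : S => ζ i) *
        (Matrix.of (fun i j : {x // x ∈ S} => L i.1 j.1)).map Complex.ofRealHom := by
    ext i j
    simp [Matrix.diagonal_mul]
  rw [this, Matrix.det_mul, Matrix.det_diagonal]
  have h4 := RingHom.map_det Complex.ofRealHom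
    (Matrix.of (fun i j : {x // x ∈ S} => L i.1 j.1))
  rw [RingHom.mapMatrix_apply] at h4
  rw [← h4, mul_comm, Finset.prod_coe_sort S ζ]
  rfl

end Stable

section FederMihail

set_option linter.unusedSectionVars false

variable {α : Type*} [Fintype α] [DecidableEq α]

/-- Indicator of membership. -/
def indX (g : α) (S : Finset α) : ℝ := if g ∈ S then 1 else 0

/-- Pairwise negative correlation of `e` and `g` under the weight `u`. -/
def RayIneq (u : Finset α → ℝ) (e g : α) : Prop :=
  (∑ S, u S * (indX e S * indX g S)) * (∑ S, u S * ((1 - indX e S) * (1 - indX g S))) ≤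
  (∑ S, u S * (indX e S * (1 - indX g S))) * (∑ S, u S * ((1 - indX e S) * indX g S))

/-- Pairwise negative correlation under all external fields. -/
def Ray (u : Finset α → ℝ) : Prop :=
  ∀ r : α → ℝ, (∀ i, 0 ≤ r i) → ∀ e g, e ≠ g → RayIneq (fun S => u S * ∏ i ∈ S, r i) e g

lemma indX_nonneg (g : α) (S : Finset α) : 0 ≤ indX g S := by
  unfold indX; split_ifs <;> norm_num

lemma indX_compl_nonneg (g : α) (S : Finset α) : 0 ≤ 1 - indX g S := by
  unfold indX; split_ifs <;> norm_num

lemma prod_update_out (r : α → ℝ) (h : α) (S : Finset α) (t : ℝ) :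
    ∏ i ∈ S, Function.update r h t i =
      (1 - indX h S) * (∏ i ∈ S, Function.update r h 1 i) +
        t * (indX h S * ∏ i ∈ S, Function.update r h 1 i) := by
  unfold indX
  by_cases hS : h ∈ S
  · simp [hS, Finset.prod_update_of_mem]
  · simp [hS, Finset.prod_update_of_notMem]

lemma Ray_out {u : Finset α → ℝ} (hu : Ray u) (h : α) :
    Ray (fun S => u S * (1 - indX h S)) := by
  intro r hr e g heg
  have := hu (Function.update r h 0) (fun i => by
    by_cases hi : i = h
    · subst hi; simp
    · simp [hi, hr]) e g heg
  have e1 : (fun S => u S * ∏ i ∈ S, Function.update r h 0 i) =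
      fun S => u S * (1 - indX h S) * ∏ i ∈ S, r i := by
    funext S
    unfold indX
    by_cases hS : h ∈ S
    · simp [hS, Finset.prod_update_of_mem]
    · simp [hS, Finset.prod_update_of_notMem]
  rwa [e1] at this

lemma lead_le {a0 a1 b0 b1 c0 c1 d0 d1 : ℝ}
    (h : ∀ t : ℝ, 0 ≤ t → (a0 + t * a1) * (d0 + t * d1) ≤ (b0 + t * b1) * (c0 + t * c1)) :
    a1 * d1 ≤ b1 * c1 := by
  by_contra hc
  push Not at hc
  have hP : 0 < a1 * d1 - b1 * c1 := by linarith
  obtain ⟨P, hPd⟩ : ∃ P, P = a1 * d1 - b1 * c1 := ⟨_, rfl⟩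
  obtain ⟨Q, hQd⟩ : ∃ Q, Q = a0 * d1 + a1 * d0 - b0 * c1 - b1 * c0 := ⟨_, rfl⟩
  obtain ⟨R, hRd⟩ : ∃ R, R = a0 * d0 - b0 * c0 := ⟨_, rfl⟩
  rw [← hPd] at hP
  obtain ⟨t, ht⟩ : ∃ t, t = (|Q| + |R|) / P + 1 := ⟨_, rfl⟩
  have ht1 : 1 ≤ t := by
    rw [ht]
    have : 0 ≤ (|Q| + |R|) / P := by positivity
    linarith
  have hPt : P * t = |Q| + |R| + P := by
    rw [ht]; field_simp
  have h1 := h t (by linarith)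
  have h2 : P * t * t + Q * t + R ≤ 0 := by
    rw [hPd, hQd, hRd]; nlinarith
  rw [hPt] at h2
  have hQ := neg_abs_le Q
  have hR := neg_abs_le R
  have hR0 := abs_nonneg R
  nlinarith [mul_le_mul_of_nonneg_right hQ (by linarith : (0:ℝ) ≤ t), mul_nonneg hR0 (by linarith : 0 ≤ t - 1), mul_pos hP (by linarith : 0 < t)]

lemma Ray_in {u : Finset α → ℝ} (hu : Ray u) (h : α) :
    Ray (fun S => u S * indX h S) := by
  intro r hr e g heg
  have key := fun (t : ℝ) (ht : 0 ≤ t) => hu (Function.update r h t) (fun i => by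
    by_cases hi : i = h
    · subst hi; simpa using ht
    · simp [hi, hr]) e g heg
  have e1 : (fun S => u S * indX h S * ∏ i ∈ S, r i) =
      fun S => r h * (u S * (indX h S * ∏ i ∈ S, Function.update r h 1 i)) := by
    funext S
    unfold indX
    by_cases hS : h ∈ S
    · simp only [hS, if_true, Finset.prod_update_of_mem]
      rw [← Finset.mul_prod_erase S r hS, Finset.sdiff_singleton_eq_erase]
      ring
    · simp [hS]
  rw [e1]
  unfold RayIneq at *
  have split : ∀ (t : ℝ) (q : Finset α → ℝ),
      ∑ S, u S * (∏ i ∈ S, Function.update r h t i) * q S =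
      (∑ S, u S * ((1 - indX h S) * (∏ i ∈ S, Function.update r h 1 i)) * q S) +
        t * ∑ S, (u S * (indX h S * ∏ i ∈ S, Function.update r h 1 i)) * q S := by
    intro t q
    rw [Finset.mul_sum, ← Finset.sum_add_distrib]
    refine Finset.sum_congr rfl fun S _ => ?_
    rw [prod_update_out r h S t]
    ring
  simp only [split] at key
  have := lead_le key
  simp only [mul_assoc (r h), ← Finset.mul_sum]
  have h2 := mul_le_mul_of_nonneg_left this (mul_nonneg (hr h) (hr h))
  nlinarith [h2]

lemma Ray_self {u : Finset α → ℝ} (hu : Ray u) {e g : α} (heg : e ≠ g) : RayIneq u e g := by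
  simpa using hu (fun _ => 1) (fun _ => zero_le_one) e g heg

/-- Elements that are not frozen under `u`. -/
noncomputable def freeEls (u : Finset α → ℝ) : Finset α := by
  classical
  exact univ.filter fun g => (∃ S, u S ≠ 0 ∧ g ∈ S) ∧ (∃ S, u S ≠ 0 ∧ g ∉ S)

lemma mem_freeEls {u : Finset α → ℝ} {g : α} :
    g ∈ freeEls u ↔ (∃ S, u S ≠ 0 ∧ g ∈ S) ∧ (∃ S, u S ≠ 0 ∧ g ∉ S) := by
  simp [freeEls]

lemma freeEls_lt {u v : Finset α → ℝ} {g : α} (hg : g ∈ freeEls u)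
    (hv : ∀ S, v S ≠ 0 → u S ≠ 0) (hg' : g ∉ freeEls v) :
    (freeEls v).card < (freeEls u).card := by
  apply Finset.card_lt_card
  rw [Finset.ssubset_iff_of_subset]
  · exact ⟨g, hg, hg'⟩
  · intro x hx
    rw [mem_freeEls] at *
    obtain ⟨⟨S, h1, h2⟩, ⟨T, h3, h4⟩⟩ := hx
    exact ⟨⟨S, hv S h1, h2⟩, ⟨T, hv T h3, h4⟩⟩

lemma fm_arith {F1g F1n F0g F0n Z1g Z1n Z0g Z0n : ℝ} (hZ0g : 0 < Z0g) (hZ0n : 0 < Z0n)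
    (h1 : F1g * Z0g ≤ F0g * Z1g) (h2 : F1n * Z0n ≤ F0n * Z1n)
    (h3 : Z1g * Z0n ≤ Z1n * Z0g) (h4 : F0n * Z0g ≤ F0g * Z0n) :
    (F1g + F1n) * (Z0g + Z0n) ≤ (F0g + F0n) * (Z1g + Z1n) := by
  obtain ⟨p, hp⟩ : ∃ p, F0g = p * Z0g := ⟨F0g / Z0g, by field_simp⟩
  obtain ⟨q, hq⟩ : ∃ q, F0n = q * Z0n := ⟨F0n / Z0n, by field_simp⟩
  subst hp hq
  have h1' : F1g ≤ p * Z1g := by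
    refine le_of_mul_le_mul_right ?_ hZ0g
    linarith
  have h2' : F1n ≤ q * Z1n := by
    refine le_of_mul_le_mul_right ?_ hZ0n
    linarith
  have h4' : q ≤ p := by
    refine le_of_mul_le_mul_right ?_ (mul_pos hZ0g hZ0n)
    linarith
  have h5 := mul_nonneg (sub_nonneg.2 h4') (sub_nonneg.2 h3)
  have h6 : (F1g + F1n) * (Z0g + Z0n) ≤ (p * Z1g + q * Z1n) * (Z0g + Z0n) :=
    mul_le_mul_of_nonneg_right (by linarith) (by linarith)
  nlinarith

/-- Feder–Mihail. -/
lemma feder_mihail (e : α) (f : Finset α → ℝ) (hf : Monotone f)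
    (k : ℕ) (N : ℕ) : ∀ u : Finset α → ℝ, (∀ S, 0 ≤ u S) → Ray u →
    (∀ S, u S ≠ 0 → S.card = k) → (freeEls u).card ≤ N →
    (∑ S, u S * indX e S * f (S.erase e)) * (∑ S, u S * (1 - indX e S)) ≤
    (∑ S, u S * (1 - indX e S) * f (S.erase e)) * (∑ S, u S * indX e S) := by
  induction N using Nat.strong_induction_on with
  | _ N ih =>
  intro u hu hR hk hN
  -- good element
  by_cases hex : ∃ g, g ≠ e ∧ 0 < ∑ S, u S * indX g S * (1 - indX e S) ∧
      0 < ∑ S, u S * (1 - indX g S) * (1 - indX e S) ∧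
      (∑ S, u S * (1 - indX g S) * (1 - indX e S) * f (S.erase e)) *
        (∑ S, u S * indX g S * (1 - indX e S)) ≤
      (∑ S, u S * indX g S * (1 - indX e S) * f (S.erase e)) *
        (∑ S, u S * (1 - indX g S) * (1 - indX e S))
  · obtain ⟨g, hge, hZg, hZn, hcov⟩ := hex
    have hgf : g ∈ freeEls u := by
      rw [mem_freeEls]
      constructor
      · obtain ⟨S, -, hS⟩ := Finset.exists_ne_zero_of_sum_ne_zero hZg.ne'
        refine ⟨S, left_ne_zero_of_mul (left_ne_zero_of_mul hS), ?_⟩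
        by_contra hc
        simp [indX, hc] at hS
      · obtain ⟨S, -, hS⟩ := Finset.exists_ne_zero_of_sum_ne_zero hZn.ne'
        refine ⟨S, left_ne_zero_of_mul (left_ne_zero_of_mul hS), ?_⟩
        intro hc
        simp [indX, hc] at hS
    have hpos : 0 < (freeEls u).card := Finset.card_pos.2 ⟨g, hgf⟩
    have i1 := ih (N - 1) (by omega) (fun S => u S * indX g S)
      (fun S => mul_nonneg (hu S) (indX_nonneg g S)) (Ray_in hR g)
      (fun S hS => hk S (left_ne_zero_of_mul hS)) (by
        have := freeEls_lt (v := fun S => u S * indX g S) hgf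
          (fun S hS => left_ne_zero_of_mul hS) (by
            rw [mem_freeEls]
            rintro ⟨-, S, hS, hg⟩
            simp [indX, hg] at hS)
        omega)
    have i2 := ih (N - 1) (by omega) (fun S => u S * (1 - indX g S))
      (fun S => mul_nonneg (hu S) (indX_compl_nonneg g S)) (Ray_out hR g)
      (fun S hS => hk S (left_ne_zero_of_mul hS)) (by
        have := freeEls_lt (v := fun S => u S * (1 - indX g S)) hgf
          (fun S hS => left_ne_zero_of_mul hS) (by
            rw [mem_freeEls]
            rintro ⟨⟨S, hS, hg⟩, -⟩
            simp [indX, hg] at hS)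
        omega)
    have hray := Ray_self hR (Ne.symm hge)
    unfold RayIneq at hray
    have r1 : ∑ S, u S * indX g S * indX e S = ∑ S, u S * (indX e S * indX g S) :=
      Finset.sum_congr rfl fun S _ => by ring
    have r2 : ∑ S, u S * (1 - indX g S) * (1 - indX e S) =
        ∑ S, u S * ((1 - indX e S) * (1 - indX g S)) :=
      Finset.sum_congr rfl fun S _ => by ring
    have r3 : ∑ S, u S * (1 - indX g S) * indX e S = ∑ S, u S * (indX e S * (1 - indX g S)) :=
      Finset.sum_congr rfl fun S _ => by ring
    have r4 : ∑ S, u S * indX g S * (1 - indX e S) = ∑ S, u S * ((1 - indX e S) * indX g S) :=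
      Finset.sum_congr rfl fun S _ => by ring
    rw [← r1, ← r2, ← r3, ← r4] at hray
    have := fm_arith hZg hZn i1 i2 hray hcov
    simp only [← Finset.sum_add_distrib] at this
    convert this using 2 <;> refine Finset.sum_congr rfl fun S _ => ?_ <;> ring
  · -- no good element: the conditional measure is a point mass
    push Not at hex
    -- abbreviations
    set Z0 := ∑ S, u S * (1 - indX e S) with hZ0
    set F0 := ∑ S, u S * (1 - indX e S) * f (S.erase e) with hF0
    have hu0 : ∀ S, 0 ≤ u S * (1 - indX e S) := fun S =>
      mul_nonneg (hu S) (indX_compl_nonneg e S)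
    have Z0split : ∀ g, Z0 = ∑ S, u S * indX g S * (1 - indX e S) +
        ∑ S, u S * (1 - indX g S) * (1 - indX e S) := fun g => by
      rw [← Finset.sum_add_distrib]
      exact Finset.sum_congr rfl fun S _ => by ring
    have F0split : ∀ g, F0 = ∑ S, u S * indX g S * (1 - indX e S) * f (S.erase e) +
        ∑ S, u S * (1 - indX g S) * (1 - indX e S) * f (S.erase e) := fun g => by
      rw [← Finset.sum_add_distrib]
      exact Finset.sum_congr rfl fun S _ => by ring
    have hgn : ∀ g, 0 ≤ ∑ S, u S * indX g S * (1 - indX e S) := fun g =>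
      Finset.sum_nonneg fun S _ => mul_nonneg (mul_nonneg (hu S) (indX_nonneg g S))
        (indX_compl_nonneg e S)
    have hnn : ∀ g, 0 ≤ ∑ S, u S * (1 - indX g S) * (1 - indX e S) := fun g =>
      Finset.sum_nonneg fun S _ => mul_nonneg (mul_nonneg (hu S) (indX_compl_nonneg g S))
        (indX_compl_nonneg e S)
    have zero_of : ∀ (q : Finset α → ℝ), (∀ S, 0 ≤ q S) → ∑ S, q S = 0 → ∀ S, q S = 0 := by
      intro q hq h S
      exact (Finset.sum_eq_zero_iff_of_nonneg (fun S _ => hq S)).1 h S (Finset.mem_univ S)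
    have hgz : ∀ g, ∑ S, u S * indX g S * (1 - indX e S) = 0 →
        ∀ S, u S * indX g S * (1 - indX e S) = 0 := fun g h => zero_of _ (fun S =>
          mul_nonneg (mul_nonneg (hu S) (indX_nonneg g S)) (indX_compl_nonneg e S)) h
    have hnz : ∀ g, ∑ S, u S * (1 - indX g S) * (1 - indX e S) = 0 →
        ∀ S, u S * (1 - indX g S) * (1 - indX e S) = 0 := fun g h => zero_of _ (fun S =>
          mul_nonneg (mul_nonneg (hu S) (indX_compl_nonneg g S)) (indX_compl_nonneg e S)) h
    -- covariance terms
    let cov : α → ℝ := fun g =>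
      (∑ S, u S * indX g S * (1 - indX e S) * f (S.erase e)) * Z0 -
        F0 * ∑ S, u S * indX g S * (1 - indX e S)
    have hcovsum : ∑ g, cov g = 0 := by
      have hcard : ∀ S, u S * ∑ g, indX g S = u S * k := by
        intro S
        by_cases hS : u S = 0
        · simp [hS]
        · rw [← hk S hS]; simp [indX]
      have a1 : ∑ g, ∑ S, u S * indX g S * (1 - indX e S) * f (S.erase e) = k * F0 := by
        rw [Finset.sum_comm, hF0, Finset.mul_sum]
        refine Finset.sum_congr rfl fun S _ => ?_
        rw [← Finset.sum_mul, ← Finset.sum_mul, ← Finset.mul_sum, hcard]; ring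
      have a2 : ∑ g, ∑ S, u S * indX g S * (1 - indX e S) = k * Z0 := by
        rw [Finset.sum_comm, hZ0, Finset.mul_sum]
        refine Finset.sum_congr rfl fun S _ => ?_
        rw [← Finset.sum_mul, ← Finset.mul_sum, hcard]; ring
      simp only [cov]
      rw [Finset.sum_sub_distrib, ← Finset.sum_mul, ← Finset.mul_sum, a1, a2]; ring
    have hcov0 : ∀ g, (g = e ∨ ∑ S, u S * indX g S * (1 - indX e S) = 0 ∨
        ∑ S, u S * (1 - indX g S) * (1 - indX e S) = 0) → cov g = 0 := by
      intro g hg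
      have hg' : ∑ S, u S * indX g S * (1 - indX e S) = 0 ∨
        ∑ S, u S * (1 - indX g S) * (1 - indX e S) = 0 := by
        rcases hg with rfl | hg
        · left
          refine Finset.sum_eq_zero fun S _ => ?_
          unfold indX; split_ifs <;> simp
        · exact hg
      rcases hg' with h | h
      · have h1 : ∑ S, u S * indX g S * (1 - indX e S) * f (S.erase e) = 0 :=
          Finset.sum_eq_zero fun S _ => by rw [hgz g h S, zero_mul]
        simp only [cov, h, h1]; ring
      · have h1 : ∑ S, u S * (1 - indX g S) * (1 - indX e S) * f (S.erase e) = 0 :=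
          Finset.sum_eq_zero fun S _ => by rw [hnz g h S, zero_mul]
        simp only [cov]
        rw [F0split g, Z0split g, h, h1]; ring
    have hcovneg : ∀ g, ¬ (g = e ∨ ∑ S, u S * indX g S * (1 - indX e S) = 0 ∨
        ∑ S, u S * (1 - indX g S) * (1 - indX e S) = 0) → cov g < 0 := by
      intro g hg
      push Not at hg
      have := hex g hg.1 (lt_of_le_of_ne (hgn g) (Ne.symm hg.2.1))
        (lt_of_le_of_ne (hnn g) (Ne.symm hg.2.2))
      simp only [cov]
      rw [F0split g, Z0split g]
      linarith
    have hdeg : ∀ g, g = e ∨ ∑ S, u S * indX g S * (1 - indX e S) = 0 ∨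
        ∑ S, u S * (1 - indX g S) * (1 - indX e S) = 0 := by
      intro g
      by_contra hg
      have h1 := hcovneg g hg
      have h2 : ∑ g, cov g < 0 := by
        refine Finset.sum_neg' (fun i _ => ?_) ⟨g, Finset.mem_univ g, h1⟩
        by_cases hi : (i = e ∨ ∑ S, u S * indX i S * (1 - indX e S) = 0 ∨
          ∑ S, u S * (1 - indX i S) * (1 - indX e S) = 0)
        · exact (hcov0 i hi).le
        · exact (hcovneg i hi).le
      linarith
    -- point mass
    have hZ0nn : 0 ≤ Z0 := Finset.sum_nonneg fun S _ => hu0 S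
    rcases hZ0nn.eq_or_lt with hz | hz
    · have h1 : ∀ S, u S * (1 - indX e S) = 0 := zero_of _ hu0 hz.symm
      have h2 : F0 = 0 := Finset.sum_eq_zero fun S _ => by rw [h1 S, zero_mul]
      rw [h2, ← hz]; simp
    obtain ⟨S0, -, hS0⟩ := Finset.exists_ne_zero_of_sum_ne_zero hz.ne'
    have huS0 : u S0 ≠ 0 := left_ne_zero_of_mul hS0
    have heS0 : e ∉ S0 := by
      intro hc
      simp [indX, hc] at hS0
    have hmem : ∀ g, g ≠ e → g ∈ S0 → ∑ S, u S * (1 - indX g S) * (1 - indX e S) = 0 := by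
      intro g hg hgS
      rcases hdeg g with h | h | h
      · exact absurd h hg
      · exfalso
        have := hgz g h S0
        simp [indX, hgS, heS0, huS0] at this
      · exact h
    have hnmem : ∀ g, g ≠ e → g ∉ S0 → ∑ S, u S * indX g S * (1 - indX e S) = 0 := by
      intro g hg hgS
      rcases hdeg g with h | h | h
      · exact absurd h hg
      · exact h
      · exfalso
        have := hnz g h S0
        simp [indX, hgS, heS0, huS0] at this
    have huniq : ∀ S, u S * (1 - indX e S) ≠ 0 → S = S0 := by
      intro S hS
      have heS : e ∉ S := by
        intro hc
        simp [indX, hc] at hS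
      have huS : u S ≠ 0 := left_ne_zero_of_mul hS
      ext g
      by_cases hg : g = e
      · subst hg; simp [heS, heS0]
      constructor
      · intro h
        by_contra hc
        have := hgz g (hnmem g hg hc) S
        simp [indX, h, heS, huS] at this
      · intro h
        by_contra hc
        have := hnz g (hmem g hg h) S
        simp [indX, hc, heS, huS] at this
    have hF0' : F0 = Z0 * f S0 := by
      rw [hF0, hZ0, Finset.sum_mul]
      refine Finset.sum_congr rfl fun S _ => ?_
      by_cases hS : u S * (1 - indX e S) = 0
      · rw [hS]; simp
      · rw [huniq S hS, Finset.erase_eq_of_notMem heS0]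
    have hsub : ∀ S, u S * indX e S ≠ 0 → S.erase e ⊆ S0 := by
      intro S hS g hg
      rw [Finset.mem_erase] at hg
      by_contra hc
      have hray := Ray_self hR (Ne.symm hg.1)
      unfold RayIneq at hray
      have h0 := hnmem g hg.1 hc
      have hz' := Z0split g
      rw [h0, zero_add] at hz'
      have r2 : ∑ S, u S * (1 - indX g S) * (1 - indX e S) =
          ∑ S, u S * ((1 - indX e S) * (1 - indX g S)) :=
        Finset.sum_congr rfl fun S _ => by ring
      have r4 : ∑ S, u S * indX g S * (1 - indX e S) = ∑ S, u S * ((1 - indX e S) * indX g S) :=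
        Finset.sum_congr rfl fun S _ => by ring
      rw [← r2, ← r4, h0, ← hz', mul_zero] at hray
      have hpos : 0 < ∑ S, u S * (indX e S * indX g S) := by
        refine Finset.sum_pos' (fun T _ => mul_nonneg (hu T)
          (mul_nonneg (indX_nonneg e T) (indX_nonneg g T))) ⟨S, Finset.mem_univ S, ?_⟩
        have heS : e ∈ S := by
          by_contra hc
          simp [indX, hc] at hS
        have huS : u S ≠ 0 := left_ne_zero_of_mul hS
        simpa [indX, heS, hg.2] using lt_of_le_of_ne (hu S) (Ne.symm huS)
      nlinarith [mul_pos hpos hz]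
    have hF1 : ∑ S, u S * indX e S * f (S.erase e) ≤ f S0 * ∑ S, u S * indX e S := by
      rw [Finset.mul_sum]
      refine Finset.sum_le_sum fun S _ => ?_
      by_cases hS : u S * indX e S = 0
      · rw [hS]; simp
      · rw [mul_comm (f S0)]
        exact mul_le_mul_of_nonneg_left (hf (hsub S hS)) (mul_nonneg (hu S) (indX_nonneg e S))
    rw [hF0']
    nlinarith [mul_le_mul_of_nonneg_right hF1 hz.le]

end FederMihail

/-- The weight of the `k`-DPP. -/
noncomputable def kw {n : ℕ} (L : Matrix (Fin n) (Fin n) ℝ) (k : ℕ) (S : Finset (Fin n)) : ℝ :=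
  if S.card = k then gramDet L S else 0

lemma gramDet_nonneg {n : ℕ} {L : Matrix (Fin n) (Fin n) ℝ} (hL : L.PosSemidef)
    (S : Finset (Fin n)) : 0 ≤ gramDet L S :=
  (hL.submatrix (Subtype.val : {x // x ∈ S} → Fin n)).det_nonneg

lemma kw_nonneg {n : ℕ} {L : Matrix (Fin n) (Fin n) ℝ} (hL : L.PosSemidef) (k : ℕ)
    (S : Finset (Fin n)) : 0 ≤ kw L k S := by
  unfold kw; split_ifs
  · exact gramDet_nonneg hL S
  · exact le_rfl

lemma bilin_stable {a b c d : ℝ} (ha : 0 ≤ a) (hb : 0 ≤ b) (hc : 0 ≤ c) (hd : 0 ≤ d)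
    (h : ∀ z w : ℂ, 0 < z.im → 0 < w.im →
      (a : ℂ) + b * z + c * w + d * (z * w) ≠ 0) : d * a ≤ b * c := by
  by_contra hlt
  push Not at hlt
  have hd0 : 0 < d := by
    rcases hd.eq_or_lt with h0 | h0
    · subst h0
      nlinarith [mul_nonneg hb hc]
    · exact h0
  have hq : 0 < c ^ 2 + d ^ 2 := by positivity
  obtain ⟨p, hp⟩ : ∃ p, p = (a * c + b * d) / (c ^ 2 + d ^ 2) := ⟨_, rfl⟩
  obtain ⟨q, hqd⟩ : ∃ q, q = (b * c - a * d) / (c ^ 2 + d ^ 2) := ⟨_, rfl⟩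
  have hq0 : q < 0 := by
    rw [hqd]
    exact div_neg_of_neg_of_pos (by linarith) hq
  have h1 : p * c - q * d = a := by
    rw [hp, hqd]; field_simp; ring
  have h2 : p * d + q * c = b := by
    rw [hp, hqd]; field_simp; ring
  refine h Complex.I ⟨-p, -q⟩ (by simp) (by simpa using hq0) ?_
  apply Complex.ext
  · simp
    linarith
  · simp
    linarith

lemma ray_posDef {n : ℕ} (L : Matrix (Fin n) (Fin n) ℝ) (hL : L.PosDef) (k : ℕ) (hk : k ≤ n)
    (e g : Fin n) (heg : e ≠ g) : RayIneq (kw L k) e g := by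
  have hn := kw_nonneg hL.posSemidef k
  unfold RayIneq
  refine bilin_stable ?_ ?_ ?_ ?_ ?_
  · exact Finset.sum_nonneg fun S _ => mul_nonneg (hn S)
      (mul_nonneg (indX_compl_nonneg _ _) (indX_compl_nonneg _ _))
  · exact Finset.sum_nonneg fun S _ => mul_nonneg (hn S)
      (mul_nonneg (indX_nonneg _ _) (indX_compl_nonneg _ _))
  · exact Finset.sum_nonneg fun S _ => mul_nonneg (hn S)
      (mul_nonneg (indX_compl_nonneg _ _) (indX_nonneg _ _))
  · exact Finset.sum_nonneg fun S _ => mul_nonneg (hn S)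
      (mul_nonneg (indX_nonneg _ _) (indX_nonneg _ _))
  · intro z w hz hw
    have h := stable_sum_ne L hL
      (fun i => (if i = e then z else 1) * (if i = g then w else 1)) (fun i => by
        by_cases h1 : i = e
        · have h2 : i ≠ g := fun h => heg (h1.symm.trans h)
          simp only [h1, heg, if_true, if_false, mul_one]
          exact Or.inl hz
        · by_cases h2 : i = g
          · simp only [h2, Ne.symm heg, if_true, if_false, one_mul]
            exact Or.inl hw
          · simp only [h1, h2, if_false, mul_one]
            right; simp) k hk
    convert h using 1
    have e0 : ∑ S ∈ (univ : Finset (Fin n)).powersetCard k, (gramDet L S : ℂ) *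
        ∏ i ∈ S, ((if i = e then z else 1) * (if i = g then w else 1)) =
        ∑ S, (kw L k S : ℂ) * ((if e ∈ S then z else 1) * (if g ∈ S then w else 1)) := by
      have : (univ : Finset (Fin n)).powersetCard k =
          univ.filter (fun S : Finset (Fin n) => S.card = k) := by
        ext S; simp [Finset.mem_powersetCard]
      rw [this, Finset.sum_filter]
      refine Finset.sum_congr rfl fun S _ => ?_
      unfold kw
      rw [Finset.prod_mul_distrib, Finset.prod_ite_eq', Finset.prod_ite_eq']
      split_ifs <;> simp
    rw [e0]
    push_cast
    simp only [Finset.sum_mul, ← Finset.sum_add_distrib]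
    refine Finset.sum_congr rfl fun S _ => ?_
    unfold indX
    split_ifs <;> push_cast <;> ring

lemma gramDet_continuous {n : ℕ} (L : Matrix (Fin n) (Fin n) ℝ) (S : Finset (Fin n)) :
    Continuous fun ε : ℝ => gramDet (L + ε • (1 : Matrix (Fin n) (Fin n) ℝ)) S := by
  unfold gramDet
  apply Continuous.matrix_det
  refine continuous_matrix fun i j => ?_
  simp only [Matrix.of_apply, Matrix.add_apply, Matrix.smul_apply, smul_eq_mul]
  fun_prop

lemma ray_posSemidef {n : ℕ} (L : Matrix (Fin n) (Fin n) ℝ) (hL : L.PosSemidef) (k : ℕ)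
    (hk : k ≤ n) (e g : Fin n) (heg : e ≠ g) : RayIneq (kw L k) e g := by
  have hcont : ∀ S, Continuous fun ε : ℝ => kw (L + ε • (1 : Matrix (Fin n) (Fin n) ℝ)) k S := by
    intro S
    unfold kw
    split_ifs
    · exact gramDet_continuous L S
    · exact continuous_const
  have hpos : ∀ ε : ℝ, 0 < ε →
      RayIneq (kw (L + ε • (1 : Matrix (Fin n) (Fin n) ℝ)) k) e g := fun ε hε =>
    ray_posDef _ (Matrix.PosDef.posSemidef_add hL (Matrix.PosDef.one.smul hε)) k hk e g heg
  unfold RayIneq at hpos ⊢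
  have h0 : L = L + (0 : ℝ) • (1 : Matrix (Fin n) (Fin n) ℝ) := by simp
  have hq : ∀ q : Finset (Fin n) → ℝ, Filter.Tendsto
      (fun ε : ℝ => ∑ S, kw (L + ε • (1 : Matrix (Fin n) (Fin n) ℝ)) k S * q S)
      (nhdsWithin 0 (Set.Ioi 0)) (nhds (∑ S, kw L k S * q S)) := by
    intro q
    have hc : Continuous (fun ε : ℝ =>
        ∑ S, kw (L + ε • (1 : Matrix (Fin n) (Fin n) ℝ)) k S * q S) :=
      continuous_finsetSum _ fun S _ => (hcont S).mul continuous_const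
    have := (hc.tendsto 0).mono_left (nhdsWithin_le_nhds (s := Set.Ioi 0))
    rwa [← h0] at this
  refine le_of_tendsto_of_tendsto ((hq _).mul (hq _)) ((hq _).mul (hq _)) ?_
  filter_upwards [self_mem_nhdsWithin] with ε hε
  exact hpos ε hε

lemma kw_Ray {n : ℕ} (L : Matrix (Fin n) (Fin n) ℝ) (hL : L.PosSemidef) (k : ℕ)
    (hk : k ≤ n) : Ray (kw L k) := by
  intro r hr e g heg
  let D : Matrix (Fin n) (Fin n) ℝ := Matrix.diagonal fun i => Real.sqrt (r i)
  have hD : (D.conjTranspose * L * D).PosSemidef := hL.conjTranspose_mul_mul_same D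
  have h := ray_posSemidef _ hD k hk e g heg
  have e1 : kw (D.conjTranspose * L * D) k = fun S => kw L k S * ∏ i ∈ S, r i := by
    funext S
    unfold kw
    split_ifs
    · unfold gramDet
      have : (Matrix.of (fun i j : {x // x ∈ S} => (D.conjTranspose * L * D) i.1 j.1)) =
          Matrix.diagonal (fun i : {x // x ∈ S} => Real.sqrt (r i)) *
          (Matrix.of (fun i j : {x // x ∈ S} => L i.1 j.1)) *
          Matrix.diagonal (fun i : {x // x ∈ S} => Real.sqrt (r i)) := by
        ext i j
        simp [D, Matrix.mul_diagonal, Matrix.diagonal_mul]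
      rw [this, Matrix.det_mul, Matrix.det_mul, Matrix.det_diagonal,
        Finset.prod_coe_sort S (fun i => Real.sqrt (r i))]
      have h2 : ∏ i ∈ S, r i = (∏ i ∈ S, Real.sqrt (r i)) * ∏ i ∈ S, Real.sqrt (r i) := by
        rw [← Finset.prod_mul_distrib]
        exact Finset.prod_congr rfl fun i _ => (Real.mul_self_sqrt (hr i)).symm
      rw [h2]; ring
    · simp
  rwa [e1] at h

/-- **Vertex expansion from negative association.** For a discrete `k`-DPP `π` with
PSD kernel `L` on `[n]`, a fixed element `e`, and any set `A` of size-`k` states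
containing `e`, the neighbor set
`N_ē(A) = {y : |y| = k, e ∉ y, ∃ x ∈ A, |x ∩ y| = k−1}` satisfies
`π_ē(N_ē(A)) ≥ π_e(A)`, where `π_e`, `π_ē` are `π` conditioned on containing,
respectively not containing, `e`. -/
theorem dpp_vertex_expansion {n k : ℕ} (hk : 1 ≤ k) (hkn : k ≤ n)
    (L : Matrix (Fin n) (Fin n) ℝ) (hL : L.PosSemidef) (e : Fin n)
    (hZe : 0 < ∑ S ∈ univ.filter (fun S : Finset (Fin n) => S.card = k ∧ e ∈ S),
      gramDet L S)
    (hZne : 0 < ∑ S ∈ univ.filter (fun S : Finset (Fin n) => S.card = k ∧ e ∉ S),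
      gramDet L S)
    (A : Finset (Finset (Fin n))) (hA : ∀ x ∈ A, x.card = k ∧ e ∈ x) :
    (∑ y ∈ univ.filter (fun y : Finset (Fin n) =>
          y.card = k ∧ e ∉ y ∧ ∃ x ∈ A, (x ∩ y).card = k - 1), gramDet L y)
        / (∑ S ∈ univ.filter (fun S : Finset (Fin n) => S.card = k ∧ e ∉ S),
            gramDet L S)
      ≥ (∑ x ∈ A, gramDet L x)
          / (∑ S ∈ univ.filter (fun S : Finset (Fin n) => S.card = k ∧ e ∈ S),
              gramDet L S) := by
  classical
  let f : Finset (Fin n) → ℝ := fun T => if ∃ x ∈ A, x.erase e ⊆ T then 1 else 0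
  have hf : Monotone f := by
    intro T U hTU
    simp only [f]
    split_ifs with h1 h2
    · exact le_rfl
    · obtain ⟨x, hx, hxT⟩ := h1
      exact absurd ⟨x, hx, hxT.trans hTU⟩ h2
    · norm_num
    · exact le_rfl
  have main := feder_mihail e f hf k _ (kw L k) (kw_nonneg hL k) (kw_Ray L hL k hkn)
    (fun S hS => by
      by_contra hc
      simp [kw, hc] at hS) le_rfl
  have c1 : ∑ S, kw L k S * indX e S =
      ∑ S ∈ univ.filter (fun S : Finset (Fin n) => S.card = k ∧ e ∈ S), gramDet L S := by
    rw [Finset.sum_filter]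
    refine Finset.sum_congr rfl fun S _ => ?_
    by_cases h1 : S.card = k <;> by_cases h2 : e ∈ S <;> simp [kw, indX, h1, h2]
  have c2 : ∑ S, kw L k S * (1 - indX e S) =
      ∑ S ∈ univ.filter (fun S : Finset (Fin n) => S.card = k ∧ e ∉ S), gramDet L S := by
    rw [Finset.sum_filter]
    refine Finset.sum_congr rfl fun S _ => ?_
    by_cases h1 : S.card = k <;> by_cases h2 : e ∈ S <;> simp [kw, indX, h1, h2]
  have c3 : ∑ S, kw L k S * indX e S * f (S.erase e) = ∑ x ∈ A, gramDet L x := by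
    have : A = univ.filter (fun S => S ∈ A) := by simp
    rw [this, Finset.sum_filter]
    refine Finset.sum_congr rfl fun S _ => ?_
    by_cases hS : S ∈ A
    · obtain ⟨h1, h2⟩ := hA S hS
      have h3 : ∃ x ∈ A, x.erase e ⊆ S.erase e := ⟨S, hS, Finset.Subset.refl _⟩
      simp only [f]
      rw [if_pos h3]
      simp [kw, indX, h1, h2, hS]
    · rw [if_neg hS]
      by_cases h1 : S.card = k
      · by_cases h2 : e ∈ S
        · have h3 : ¬ ∃ x ∈ A, x.erase e ⊆ S.erase e := by
            rintro ⟨x, hx, hxS⟩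
            obtain ⟨hx1, hx2⟩ := hA x hx
            have h4 : x.erase e = S.erase e := by
              apply Finset.eq_of_subset_of_card_le hxS
              rw [Finset.card_erase_of_mem h2, Finset.card_erase_of_mem hx2, h1, hx1]
            have h5 : x = S := by
              rw [← Finset.insert_erase hx2, h4, Finset.insert_erase h2]
            exact hS (h5 ▸ hx)
          simp only [f]
          rw [if_neg h3, mul_zero]
        · simp [indX, h2]
      · simp [kw, h1]
  have c4 : ∑ S, kw L k S * (1 - indX e S) * f (S.erase e) =
      ∑ y ∈ univ.filter (fun y : Finset (Fin n) =>
          y.card = k ∧ e ∉ y ∧ ∃ x ∈ A, (x ∩ y).card = k - 1), gramDet L y := by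
    rw [Finset.sum_filter]
    refine Finset.sum_congr rfl fun S _ => ?_
    by_cases h1 : S.card = k
    · by_cases h2 : e ∈ S
      · simp [indX, h2]
      · have h3 : (∃ x ∈ A, x.erase e ⊆ S.erase e) ↔ ∃ x ∈ A, (x ∩ S).card = k - 1 := by
          rw [Finset.erase_eq_of_notMem h2]
          refine exists_congr fun x => and_congr_right fun hx => ?_
          obtain ⟨hx1, hx2⟩ := hA x hx
          have hc : (x.erase e).card = k - 1 := by rw [Finset.card_erase_of_mem hx2, hx1]
          have hsub : x ∩ S ⊆ x.erase e := by
            intro a ha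
            rw [Finset.mem_inter] at ha
            rw [Finset.mem_erase]
            exact ⟨fun h => h2 (h ▸ ha.2), ha.1⟩
          constructor
          · intro h
            rw [← hc]
            congr 1
            exact Finset.Subset.antisymm hsub
              (Finset.subset_inter (Finset.erase_subset _ _) h)
          · intro h
            have := Finset.eq_of_subset_of_card_le hsub (by rw [hc, h])
            rw [← this]
            exact Finset.inter_subset_right
        simp only [f, h3]
        by_cases h4 : ∃ x ∈ A, (x ∩ S).card = k - 1
        · rw [if_pos h4, if_pos ⟨h1, h2, h4⟩]
          simp [kw, indX, h1, h2]
        · rw [if_neg h4, if_neg (fun h => h4 h.2.2), mul_zero]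
    · simp [kw, h1]
  rw [c1, c2, c3, c4] at main
  rw [ge_iff_le, div_le_div_iff₀ hZe hZne]
  exact main
end

section
/- Let L be a continuous PSD kernel on a closed domain C ⊆ ℝ^d and let ν be the distribution of the output of the randomized greedy algorithm that, for i = 0,…,k−1, samples x_{i+1} from the conditional distribution with density proportional to det_L(x₁,…,x_i,y) in y. Then for every k-subset {x₁,…,x_k} ⊆ C, the density satisfies f_ν(x₁,…,x_k) ≤ (k!)² · f_π(x₁,…,x_k), where π is the k-DPP defined by L. -/
open MeasureTheory

/-- Gram determinant `det_L(x₁,…,x_m)` of a tuple of points under kernel `L`. -/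
noncomputable def detL {E : Type*} (L : E → E → ℝ) {m : ℕ} (x : Fin m → E) : ℝ :=
  Matrix.det (Matrix.of (fun i j : Fin m => L (x i) (x j)))

/-- The first `m` entries of a `k`-tuple. -/
def prefixTuple {E : Type*} {k : ℕ} (x : Fin k → E) (m : ℕ) (h : m ≤ k) :
    Fin m → E :=
  fun j => x ⟨j.1, lt_of_lt_of_le j.2 h⟩

open Matrix in
lemma aux_gram {n : ℕ} (A : Matrix (Fin n) (Fin n) ℝ) (h : A.PosSemidef) :
    ∃ B : Matrix (Fin n) (Fin n) ℝ, A = Bᵀ * B := by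
  open scoped MatrixOrder in
  obtain ⟨B, hB⟩ := CStarAlgebra.nonneg_iff_eq_star_mul_self.mp h.nonneg
  refine ⟨B, ?_⟩
  rw [hB, star_eq_conjTranspose, conjTranspose_eq_transpose_of_trivial]

open Matrix in
lemma aux_det_rank_one {n : ℕ} (A : Matrix (Fin n) (Fin n) ℝ) (h : A.PosSemidef)
    (u : Fin n → ℝ) :
    (A + vecMulVec u u).det = A.det + u ⬝ᵥ (A.adjugate *ᵥ u) := by
  have key : ∀ t : ℝ, 0 < t → ((A + t • (1 : Matrix (Fin n) (Fin n) ℝ)) + vecMulVec u u).det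
      = (A + t • (1 : Matrix (Fin n) (Fin n) ℝ)).det
        + u ⬝ᵥ ((A + t • (1 : Matrix (Fin n) (Fin n) ℝ)).adjugate *ᵥ u) := by
    intro t ht
    have hp : (A + t • (1 : Matrix (Fin n) (Fin n) ℝ)).PosDef :=
      PosDef.posSemidef_add h (PosDef.one.smul ht)
    generalize A + t • (1 : Matrix (Fin n) (Fin n) ℝ) = D at hp
    have hu : IsUnit D.det := isUnit_iff_ne_zero.mpr hp.det_pos.ne'
    have h1 := det_add_replicateCol_mul_replicateRow (ι := Unit) hu u u
    rw [vecMulVec_eq Unit, h1, det_unique (n := Unit), Matrix.inv_def, Ring.inverse_eq_inv',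
      Matrix.add_apply, one_apply_eq, Matrix.mul_smul, Matrix.smul_mul, Matrix.smul_apply,
      smul_eq_mul, mul_add, mul_one, mul_inv_cancel_left₀ hp.det_pos.ne', Matrix.mul_assoc]
    congr 1
  have l1 : Continuous fun t : ℝ =>
      ((A + t • (1 : Matrix (Fin n) (Fin n) ℝ)) + vecMulVec u u).det := by fun_prop
  have l2 : Continuous fun t : ℝ => (A + t • (1 : Matrix (Fin n) (Fin n) ℝ)).det
        + u ⬝ᵥ ((A + t • (1 : Matrix (Fin n) (Fin n) ℝ)).adjugate *ᵥ u) := by fun_prop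
  have t1 := (l1.tendsto 0).mono_left (nhdsWithin_le_nhds (s := Set.Ioi 0))
  have t2 := (l2.tendsto 0).mono_left (nhdsWithin_le_nhds (s := Set.Ioi 0))
  have t3 := t2.congr' (by
    filter_upwards [self_mem_nhdsWithin] with t ht
    exact (key t ht).symm)
  have := tendsto_nhds_unique t1 t3
  simpa using this

open Matrix in
lemma aux_adj {n : ℕ} (A : Matrix (Fin n) (Fin n) ℝ) (h : A.PosSemidef) :
    ∃ C : Matrix (Fin n) (Fin n) ℝ, A.adjugate = C * Cᵀ ∧
      ∀ j, A.det ≤ A j j * A.adjugate j j := by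
  obtain ⟨B, rfl⟩ := aux_gram A h
  have h1 : (Bᵀ * B).adjugate = B.adjugate * B.adjugateᵀ := by
    rw [adjugate_mul_distrib, adjugate_transpose]
  refine ⟨B.adjugate, h1, fun j => ?_⟩
  rw [h1, det_mul, det_transpose]
  have h2 : B.det = ∑ i, B i j * B.adjugate j i := by
    have := congrFun (congrFun (adjugate_mul B) j) j
    simp only [mul_apply, Matrix.smul_apply, one_apply_eq, smul_eq_mul, mul_one] at this
    rw [← this]; exact Finset.sum_congr rfl fun i _ => mul_comm _ _
  have h3 := Finset.sum_mul_sq_le_sq_mul_sq Finset.univ (fun i => B i j) (fun i => B.adjugate j i)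
  rw [← h2] at h3
  simp only [mul_apply, transpose_apply, ← sq]
  exact h3

lemma aux_adj_diag {n : ℕ} (A : Matrix (Fin (n+1)) (Fin (n+1)) ℝ) (j : Fin (n+1)) :
    A.adjugate j j = (A.submatrix j.succAbove j.succAbove).det := by
  rw [Matrix.adjugate_fin_succ_eq_det_submatrix]
  have : ((-1:ℝ)) ^ ((j:ℕ) + (j:ℕ)) = 1 := by rw [← two_mul, pow_mul]; simp
  rw [this, one_mul]

lemma aux_fischer {n : ℕ} (A : Matrix (Fin (n+1)) (Fin (n+1)) ℝ) (h : A.PosSemidef)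
    (j : Fin (n+1)) :
    A.det ≤ A j j * (A.submatrix j.succAbove j.succAbove).det := by
  obtain ⟨C, _, h2⟩ := aux_adj A h
  rw [← aux_adj_diag]; exact h2 j

open Matrix in
lemma aux_pt {n : ℕ} (A : Matrix (Fin (n+1)) (Fin (n+1)) ℝ) (h : A.PosSemidef)
    (u : Fin (n+1) → ℝ) :
    (A + vecMulVec u u).det ≤ (n + 1 : ℝ) *
      ∑ j, (A j j + u j ^ 2) * (A.submatrix j.succAbove j.succAbove).det := by
  obtain ⟨C, h1, h2⟩ := aux_adj A h
  simp_rw [← aux_adj_diag]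
  have hd : ∀ j, A.adjugate j j = ∑ i, C j i ^ 2 := by
    intro j; rw [h1]; simp [mul_apply, sq]
  have hd0 : ∀ j, 0 ≤ A.adjugate j j := fun j => by
    rw [hd]; positivity
  have hq : u ⬝ᵥ (A.adjugate *ᵥ u) ≤ (n + 1 : ℝ) * ∑ j, u j ^ 2 * A.adjugate j j := by
    have e1 : u ⬝ᵥ (A.adjugate *ᵥ u) = ∑ i, (∑ j, u j * C j i) ^ 2 := by
      rw [h1, ← mulVec_mulVec, dotProduct_mulVec, mulVec_transpose]
      simp [dotProduct, vecMul, sq]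
    rw [e1]
    calc ∑ i, (∑ j, u j * C j i) ^ 2 ≤ ∑ i, ((n + 1 : ℝ) * ∑ j, (u j * C j i) ^ 2) := by
          refine Finset.sum_le_sum fun i _ => ?_
          have := sq_sum_le_card_mul_sum_sq (s := Finset.univ) (f := fun j => u j * C j i)
          simpa using this
      _ = _ := by
          rw [← Finset.mul_sum, Finset.sum_comm]
          simp_rw [hd, Finset.mul_sum, mul_pow]
  have hs : A.det ≤ (n + 1 : ℝ) * ∑ j, A j j * A.adjugate j j := by
    have hn : ∀ j, 0 ≤ A j j * A.adjugate j j := fun j => mul_nonneg h.diag_nonneg (hd0 j)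
    have a1 : A.det ≤ ∑ j, A j j * A.adjugate j j :=
      (h2 0).trans (Finset.single_le_sum (f := fun j => A j j * A.adjugate j j)
        (fun j _ => hn j) (Finset.mem_univ 0))
    have a2 : 0 ≤ ∑ j, A j j * A.adjugate j j := Finset.sum_nonneg fun j _ => hn j
    have a3 : (0:ℝ) ≤ n := by positivity
    nlinarith
  rw [aux_det_rank_one A h]
  simp_rw [add_mul, Finset.sum_add_distrib, mul_add]
  linarith

/-- Residual kernel after conditioning on `p`. -/
noncomputable def resK {E : Type*} (K : E → E → ℝ) (p : E) : E → E → ℝ :=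
  fun y z => K y z - K y p * K p z / K p p

open Matrix in
lemma aux_detL_cons {E : Type*} (K : E → E → ℝ) (p : E) (hp : K p p ≠ 0) {m : ℕ}
    (w : Fin m → E) :
    detL K (Fin.cons p w : Fin (m+1) → E) = K p p * detL (resK K p) w := by
  unfold detL
  set N : Matrix (Fin (m+1)) (Fin (m+1)) ℝ := Matrix.of fun i j =>
    (Fin.cons (K p ((Fin.cons p w : Fin (m+1) → E) j))
      (fun i' : Fin m => resK K p (w i') ((Fin.cons p w : Fin (m+1) → E) j)) : Fin (m+1) → ℝ) i
    with hN
  have h1 : det (Matrix.of (fun i j : Fin (m+1) => K ((Fin.cons p w : Fin (m+1) → E) i)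
      ((Fin.cons p w : Fin (m+1) → E) j))) = N.det := by
    refine det_eq_of_forall_row_eq_smul_add_const
      (Fin.cons 0 (fun i => K (w i) p / K p p) : Fin (m+1) → ℝ) 0 rfl ?_
    intro i j
    refine Fin.cases ?_ (fun i => ?_) i
    · simp [hN]
    · simp [hN, resK]; ring
  rw [h1, det_succ_column_zero, Fin.sum_univ_succ, Finset.sum_eq_zero]
  · simp only [hN, Fin.val_zero, pow_zero, one_mul, add_zero]
    congr 1
  · intro i _
    have : N i.succ 0 = 0 := by
      simp only [hN, of_apply, Fin.cons_succ, Fin.cons_zero, resK]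
      field_simp; ring
    rw [this]; ring

open Matrix in
lemma aux_resK_psd {E : Type*} (K : E → E → ℝ) (hs : ∀ x y, K x y = K y x)
    (hK : ∀ (m : ℕ) (x : Fin m → E), (Matrix.of (fun i j : Fin m => K (x i) (x j))).PosSemidef)
    (p : E) (hp : 0 < K p p) (m : ℕ) (x : Fin m → E) :
    (Matrix.of (fun i j : Fin m => resK K p (x i) (x j))).PosSemidef := by
  have h := (hK (m+1) (Fin.cons p x)).conjTranspose_mul_mul_same
    (Matrix.of fun (i : Fin (m+1)) (j : Fin m) =>
      (Fin.cons (- K p (x j) / K p p) (fun i' => if i' = j then (1:ℝ) else 0) : Fin (m+1) → ℝ) i)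
  convert h using 1
  ext i j
  simp only [mul_apply, of_apply, conjTranspose_apply, star_trivial, Fin.sum_univ_succ,
    Fin.cons_zero, Fin.cons_succ, resK]
  simp [hs (x i) p]
  field_simp
  ring

lemma aux_detL_nonneg {E : Type*} (K : E → E → ℝ)
    (hK : ∀ (m : ℕ) (x : Fin m → E), (Matrix.of (fun i j : Fin m => K (x i) (x j))).PosSemidef)
    {m : ℕ} (x : Fin m → E) : 0 ≤ detL K x := (hK m x).det_nonneg

lemma aux_diag_nonneg {E : Type*} (K : E → E → ℝ)
    (hK : ∀ (m : ℕ) (x : Fin m → E), (Matrix.of (fun i j : Fin m => K (x i) (x j))).PosSemidef)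
    (x : E) : 0 ≤ K x x := (hK 1 (fun _ => x)).diag_nonneg (i := 0)

lemma aux_hadamard {E : Type*} (K : E → E → ℝ)
    (hK : ∀ (m : ℕ) (x : Fin m → E), (Matrix.of (fun i j : Fin m => K (x i) (x j))).PosSemidef) :
    ∀ {m : ℕ} (x : Fin m → E), detL K x ≤ ∏ i, K (x i) (x i)
  | 0, x => by simp [detL]
  | m + 1, x => by
    rw [Fin.prod_univ_succ]
    refine (aux_fischer _ (hK _ x) 0).trans ?_
    exact mul_le_mul_of_nonneg_left (aux_hadamard K hK (fun i => x i.succ))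
      (aux_diag_nonneg K hK _)

lemma aux_detL_continuous {E : Type*} [TopologicalSpace E] (K : E → E → ℝ)
    (hc : Continuous fun q : E × E => K q.1 q.2) (m : ℕ) :
    Continuous fun x : Fin m → E => detL K x := by
  unfold detL
  refine Continuous.matrix_det (continuous_matrix fun i j => ?_)
  have h : Continuous fun x : Fin m → E => (x i, x j) :=
    (continuous_apply i).prodMk (continuous_apply j)
  exact hc.comp h

lemma aux_detL_pt {E : Type*} (K : E → E → ℝ) (hs : ∀ x y, K x y = K y x)
    (hK : ∀ (m : ℕ) (x : Fin m → E), (Matrix.of (fun i j : Fin m => K (x i) (x j))).PosSemidef)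
    (p : E) (hp : 0 < K p p) {n : ℕ} (z : Fin (n+1) → E) :
    detL K z ≤ (n + 1 : ℝ) *
      ∑ j, K (z j) (z j) * detL (resK K p) (fun i => z (j.succAbove i)) := by
  have h := aux_pt _ (aux_resK_psd K hs hK p hp (n+1) z)
    (fun i => K (z i) p / Real.sqrt (K p p))
  have hsq : Real.sqrt (K p p) * Real.sqrt (K p p) = K p p := Real.mul_self_sqrt hp.le
  have hu : ∀ i j, K (z i) p / Real.sqrt (K p p) * (K (z j) p / Real.sqrt (K p p))
      = K (z i) p * K p (z j) / K p p := by
    intro i j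
    rw [div_mul_div_comm, hsq, hs (z j) p]
  have e1 : (Matrix.of fun i j => resK K p (z i) (z j)) +
      Matrix.vecMulVec (fun i => K (z i) p / Real.sqrt (K p p))
        (fun i => K (z i) p / Real.sqrt (K p p)) = Matrix.of fun i j => K (z i) (z j) := by
    ext i j
    simp only [Matrix.add_apply, Matrix.of_apply, Matrix.vecMulVec_apply, hu, resK]
    ring
  rw [e1] at h
  refine h.trans (le_of_eq ?_)
  congr 1
  refine Finset.sum_congr rfl fun j _ => ?_
  congr 1
  simp only [sq, hu, Matrix.of_apply, resK]
  ring

section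
variable {E : Type*} [TopologicalSpace E] [SecondCountableTopology E] [MeasurableSpace E]
  [BorelSpace E]

lemma aux_detL_integrable (μ : Measure E) [SigmaFinite μ] (K : E → E → ℝ)
    (hc : Continuous fun q : E × E => K q.1 q.2)
    (hK : ∀ (m : ℕ) (x : Fin m → E), (Matrix.of (fun i j : Fin m => K (x i) (x j))).PosSemidef)
    (hi : Integrable (fun y => K y y) μ) (n : ℕ) :
    Integrable (fun z : Fin n → E => detL K z) (Measure.pi fun _ => μ) := by
  have h1 : Integrable (fun z : Fin n → E => ∏ i, K (z i) (z i)) (Measure.pi fun _ => μ) :=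
    Integrable.fintype_prod (f := fun _ y => K y y) (fun _ => hi)
  refine h1.mono' (aux_detL_continuous K hc n).aestronglyMeasurable ?_
  refine Filter.Eventually.of_forall fun z => ?_
  rw [Real.norm_of_nonneg (aux_detL_nonneg K hK z)]
  exact aux_hadamard K hK z

lemma aux_resK_continuous (K : E → E → ℝ)
    (hc : Continuous fun q : E × E => K q.1 q.2) (p : E) :
    Continuous fun q : E × E => resK K p q.1 q.2 := by
  unfold resK
  have h1 : Continuous fun q : E × E => K q.1 p :=
    hc.comp (continuous_fst.prodMk continuous_const)
  have h2 : Continuous fun q : E × E => K p q.2 :=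
    hc.comp (continuous_const.prodMk continuous_snd)
  exact hc.sub ((h1.mul h2).div_const _)

lemma aux_int_step (μ : Measure E) [SigmaFinite μ] (K : E → E → ℝ)
    (hc : Continuous fun q : E × E => K q.1 q.2) (hs : ∀ x y, K x y = K y x)
    (hK : ∀ (m : ℕ) (x : Fin m → E), (Matrix.of (fun i j : Fin m => K (x i) (x j))).PosSemidef)
    (hi : Integrable (fun y => K y y) μ) (p : E) (hp : 0 < K p p) (n : ℕ) :
    ∫ z : Fin (n+1) → E, detL K z ∂(Measure.pi fun _ => μ) ≤
      (n + 1 : ℝ) ^ 2 * ((∫ y, K y y ∂μ) *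
        ∫ z : Fin n → E, detL (resK K p) z ∂(Measure.pi fun _ => μ)) := by
  have hK' := aux_resK_psd K hs hK p hp
  have hc' := aux_resK_continuous K hc p
  have hd : Continuous fun y : E => K y y := hc.comp (continuous_id.prodMk continuous_id)
  have hd' : Continuous fun y : E => resK K p y y :=
    hc'.comp (continuous_id.prodMk continuous_id)
  have hi' : Integrable (fun y => resK K p y y) μ := by
    refine hi.mono' hd'.aestronglyMeasurable (Filter.Eventually.of_forall fun y => ?_)
    rw [Real.norm_of_nonneg (aux_diag_nonneg _ hK' y)]
    simp only [resK, hs p y]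
    have : 0 ≤ K y p * K y p / K p p := div_nonneg (mul_self_nonneg _) hp.le
    linarith
  have hI := aux_detL_integrable μ (resK K p) hc' hK' hi' n
  have hprod := hi.mul_prod hI
  have hmp := fun j : Fin (n+1) => measurePreserving_piFinSuccAbove (fun _ : Fin (n+1) => μ) j
  have hterm : ∀ j : Fin (n+1), Integrable
      (fun z : Fin (n+1) → E => K (z j) (z j) * detL (resK K p) (fun i => z (j.succAbove i)))
      (Measure.pi fun _ => μ) := fun j => (hmp j).integrable_comp_of_integrable hprod
  have hval : ∀ j : Fin (n+1), ∫ z : Fin (n+1) → E,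
      K (z j) (z j) * detL (resK K p) (fun i => z (j.succAbove i)) ∂(Measure.pi fun _ => μ)
      = (∫ y, K y y ∂μ) * ∫ z : Fin n → E, detL (resK K p) z ∂(Measure.pi fun _ => μ) := by
    intro j
    rw [← integral_prod_mul]
    exact (hmp j).integral_comp' (fun q : E × (Fin n → E) => K q.1 q.1 * detL (resK K p) q.2)
  have hsum := (integrable_finsetSum Finset.univ (fun j _ => hterm j)).const_mul (n + 1 : ℝ)
  have hle := integral_mono_of_nonneg
    (Filter.Eventually.of_forall fun z : Fin (n+1) → E => aux_detL_nonneg K hK z) hsum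
    (Filter.Eventually.of_forall fun z => aux_detL_pt K hs hK p hp z)
  refine hle.trans (le_of_eq ?_)
  rw [integral_const_mul, integral_finsetSum _ (fun j _ => hterm j)]
  simp_rw [hval]
  simp
  ring

lemma aux_prefix_succ {k : ℕ} (x : Fin (k+1) → E) (m : ℕ) (h : m ≤ k) :
    prefixTuple x (m+1) (Nat.succ_le_succ h) =
      (Fin.cons (x 0) (prefixTuple (fun i => x i.succ) m h) : Fin (m+1) → E) := by
  funext i
  refine Fin.cases rfl (fun i => rfl) i

lemma aux_main (μ : Measure E) [SigmaFinite μ] : ∀ (k : ℕ) (K : E → E → ℝ)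
    (_ : Continuous fun q : E × E => K q.1 q.2) (_ : ∀ x y, K x y = K y x)
    (_ : ∀ (m : ℕ) (x : Fin m → E), (Matrix.of (fun i j : Fin m => K (x i) (x j))).PosSemidef)
    (x : Fin k → E),
    (∏ i : Fin k, detL K (prefixTuple x (i.1 + 1) i.isLt)
          / (∫ y, detL K (Fin.snoc (prefixTuple x i.1 i.isLt.le) y : Fin (i.1 + 1) → E) ∂μ))
      * ∫ z : Fin k → E, detL K z ∂(Measure.pi fun _ => μ) ≤
      (Nat.factorial k : ℝ) ^ 2 * detL K x := by
  intro k
  induction k with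
  | zero =>
    intro K _ _ _ x
    simp [detL, Measure.real]
  | succ k ih =>
    intro K hc hs hK x
    have h1 : ∀ y : E, ∀ w : Fin 1 → E, w 0 = y → detL K w = K y y := by
      intro y w hw; simp [detL, hw]
    have hT : (∫ y, detL K (Fin.snoc (prefixTuple x 0 (Nat.zero_le _)) y : Fin (0 + 1) → E) ∂μ)
        = ∫ y, K y y ∂μ :=
      integral_congr_ae (Filter.Eventually.of_forall fun y => h1 y _ rfl)
    have hR : 0 ≤ (Nat.factorial (k+1) : ℝ) ^ 2 * detL K x :=
      mul_nonneg (by positivity) (aux_detL_nonneg K hK x)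
    rw [Fin.prod_univ_succ]
    have hD : detL K (prefixTuple x ((0 : Fin (k+1)).1 + 1) (0 : Fin (k+1)).isLt)
        = K (x 0) (x 0) := h1 _ _ rfl
    have hT' : (∫ y, detL K (Fin.snoc (prefixTuple x (0 : Fin (k+1)).1 (0 : Fin (k+1)).isLt.le) y :
        Fin ((0 : Fin (k+1)).1 + 1) → E) ∂μ) = ∫ y, K y y ∂μ := hT
    rw [hD, hT']
    by_cases ha : K (x 0) (x 0) = 0
    · rw [ha]; simpa using hR
    by_cases hT0 : ∫ y, K y y ∂μ = 0
    · rw [hT0]; simpa using hR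
    have hap : 0 < K (x 0) (x 0) := lt_of_le_of_ne (aux_diag_nonneg K hK _) (Ne.symm ha)
    have hTp : 0 < ∫ y, K y y ∂μ :=
      lt_of_le_of_ne (integral_nonneg fun y => aux_diag_nonneg K hK y) (Ne.symm hT0)
    have hi : Integrable (fun y => K y y) μ := by
      by_contra hni
      exact hT0 (integral_undef hni)
    have hK' := aux_resK_psd K hs hK (x 0) hap
    have hfac : ∀ i : Fin k,
        detL K (prefixTuple x (i.succ.1 + 1) i.succ.isLt)
          / (∫ y, detL K (Fin.snoc (prefixTuple x i.succ.1 i.succ.isLt.le) y :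
              Fin (i.succ.1 + 1) → E) ∂μ)
        = detL (resK K (x 0)) (prefixTuple (fun i => x i.succ) (i.1 + 1) i.isLt)
          / (∫ y, detL (resK K (x 0)) (Fin.snoc (prefixTuple (fun i => x i.succ) i.1 i.isLt.le) y :
              Fin (i.1 + 1) → E) ∂μ) := by
      intro i
      have a1 : detL K (prefixTuple x (i.succ.1 + 1) i.succ.isLt) = K (x 0) (x 0) *
          detL (resK K (x 0)) (prefixTuple (fun i => x i.succ) (i.1 + 1) i.isLt) := by
        rw [← aux_detL_cons K (x 0) ha, ← aux_prefix_succ]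
        rfl
      have a2 : ∀ y, detL K (Fin.snoc (prefixTuple x i.succ.1 i.succ.isLt.le) y :
              Fin (i.succ.1 + 1) → E) = K (x 0) (x 0) * detL (resK K (x 0))
              (Fin.snoc (prefixTuple (fun i => x i.succ) i.1 i.isLt.le) y :
              Fin (i.1 + 1) → E) := by
        intro y
        rw [← aux_detL_cons K (x 0) ha]
        have := Fin.cons_snoc_eq_snoc_cons (β := E) (x 0)
          (prefixTuple (fun i => x i.succ) i.1 i.isLt.le) y
        rw [this, ← aux_prefix_succ]
        rfl
      simp_rw [a1, a2]
      rw [integral_const_mul, mul_div_mul_left _ _ ha]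
    rw [Finset.prod_congr rfl fun i _ => hfac i]
    have hih := ih (resK K (x 0)) (aux_resK_continuous K hc (x 0))
      (fun y z => by simp only [resK, hs z y, hs (x 0) z, hs y (x 0)]; ring) hK'
      (fun i => x i.succ)
    have hx : detL K x = K (x 0) (x 0) * detL (resK K (x 0)) (fun i => x i.succ) := by
      rw [← aux_detL_cons K (x 0) ha]
      congr 1
      exact (Fin.cons_self_tail x).symm
    have hstep := aux_int_step μ K hc hs hK hi (x 0) hap k
    have hP : 0 ≤ ∏ i : Fin k,
        detL (resK K (x 0)) (prefixTuple (fun i => x i.succ) (i.1 + 1) i.isLt)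
          / (∫ y, detL (resK K (x 0)) (Fin.snoc (prefixTuple (fun i => x i.succ) i.1 i.isLt.le) y :
              Fin (i.1 + 1) → E) ∂μ) :=
      Finset.prod_nonneg fun i _ => div_nonneg (aux_detL_nonneg _ hK' _)
        (integral_nonneg fun y => aux_detL_nonneg _ hK' _)
    rw [hx]
    generalize (∏ i : Fin k,
        detL (resK K (x 0)) (prefixTuple (fun i => x i.succ) (i.1 + 1) i.isLt)
          / (∫ y, detL (resK K (x 0)) (Fin.snoc (prefixTuple (fun i => x i.succ) i.1 i.isLt.le) y :
              Fin (i.1 + 1) → E) ∂μ)) = P at *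
    set T := ∫ y, K y y ∂μ
    set a := K (x 0) (x 0)
    have hn : 0 ≤ a / T * P := mul_nonneg (div_nonneg hap.le hTp.le) hP
    refine (mul_le_mul_of_nonneg_left hstep hn).trans ?_
    have h3 := mul_le_mul_of_nonneg_left hih (show 0 ≤ a * (k + 1 : ℝ) ^ 2 by positivity)
    rw [Nat.factorial_succ]
    push_cast
    refine le_trans (le_of_eq ?_) (h3.trans (le_of_eq ?_))
    · field_simp
    · ring
end

/-- **Greedy (approximate volume) sampling density bound.** Let `ν` be the output
distribution of the greedy algorithm which samples `x_{i+1}` from the conditional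
distribution with density proportional to `det_L(x₁,…,x_i,y)`. Its (symmetrized)
density satisfies `f_ν(x₁,…,x_k) ≤ (k!)² · f_π(x₁,…,x_k)`, where `π` is the `k`-DPP
of `L` with partition function `Z = (1/k!)∫…∫ det_L`. -/
theorem greedy_density_bound {d k : ℕ} (hk : 1 ≤ k)
    (C : Set (EuclideanSpace ℝ (Fin d))) (hC : IsClosed C)
    (L : EuclideanSpace ℝ (Fin d) → EuclideanSpace ℝ (Fin d) → ℝ)
    (hLcont : Continuous fun p : EuclideanSpace ℝ (Fin d) × EuclideanSpace ℝ (Fin d) =>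
      L p.1 p.2)
    (hLsymm : ∀ x y, L x y = L y x)
    (hLpsd : ∀ (m : ℕ) (x : Fin m → EuclideanSpace ℝ (Fin d)),
      (Matrix.of (fun i j : Fin m => L (x i) (x j))).PosSemidef)
    (hZ : 0 < ∫ z in Set.univ.pi (fun _ : Fin k => C), detL L z)
    (x : Fin k → EuclideanSpace ℝ (Fin d)) (hx : ∀ i, x i ∈ C) :
    (∑ σ : Equiv.Perm (Fin k), ∏ i : Fin k,
        detL L (prefixTuple (x ∘ σ) (i.1 + 1) i.isLt)
          / (∫ y in C, detL L (Fin.snoc (prefixTuple (x ∘ σ) i.1 i.isLt.le) y)))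
      ≤ ((Nat.factorial k : ℝ)) ^ 2 *
          (detL L x /
            ((1 / (Nat.factorial k : ℝ)) *
              ∫ z in Set.univ.pi (fun _ : Fin k => C), detL L z)) := by
  have hf : (0:ℝ) < (Nat.factorial k : ℝ) := by exact_mod_cast Nat.factorial_pos k
  have hvol : ((volume : Measure (Fin k → EuclideanSpace ℝ (Fin d))).restrict
      (Set.univ.pi (fun _ : Fin k => C))) = Measure.pi (fun _ => volume.restrict C) := by
    rw [volume_pi, Measure.restrict_pi_pi]
  rw [hvol] at hZ ⊢
  set I := ∫ z, detL L z ∂(Measure.pi (fun _ : Fin k => volume.restrict C)) with hI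
  have hterm : ∀ σ : Equiv.Perm (Fin k), (∏ i : Fin k,
        detL L (prefixTuple (x ∘ σ) (i.1 + 1) i.isLt)
          / (∫ y in C, detL L (Fin.snoc (prefixTuple (x ∘ σ) i.1 i.isLt.le) y)))
      ≤ (Nat.factorial k : ℝ) ^ 2 * detL L x / I := by
    intro σ
    rw [le_div_iff₀ hZ]
    have h := aux_main (volume.restrict C) k L hLcont hLsymm hLpsd (x ∘ σ)
    have hσ : detL L (x ∘ σ) = detL L x := by
      unfold detL
      exact Matrix.det_submatrix_equiv_self σ (Matrix.of fun i j => L (x i) (x j))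
    rw [hσ] at h
    exact h
  refine (Finset.sum_le_sum fun σ _ => hterm σ).trans (le_of_eq ?_)
  rw [Finset.sum_const, Finset.card_univ, Fintype.card_perm, Fintype.card_fin, nsmul_eq_mul]
  field_simp
end
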